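/- For every real number α > 0, the class K_α^+ of strictly hereditarily α-sparse finite graphs is indivisible if and only if α ≥ 2. -/

import Mathlib

open SimpleGraph

/-- `δ_α(G) = |V(G)| − α·e(G)`, where `e(G)` is the number of edges of `G`. -/
noncomputable def deltaAlpha (α : ℝ) {V : Type} (G : SimpleGraph V) : ℝ :=
  (Nat.card V : ℝ) - α * (Nat.card G.edgeSet : ℝ)

/-- `G ∈ K_α^+`: `δ_α(H) > 0` for every non-empty induced subgraph `H` of `G`. -/
def MemKalphaPlus (α : ℝ) {V : Type} (G : SimpleGraph V) : Prop :=
  ∀ s : Set V, s.Nonempty → 0 < deltaAlpha α (G.induce s)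

/-- A class of finite simple graphs (indexed by the number of vertices) is indivisible. -/
def Indivisible (K : ∀ n : ℕ, SimpleGraph (Fin n) → Prop) : Prop :=
  ∀ (n : ℕ) (A : SimpleGraph (Fin n)), K n A → ∀ k : ℕ, 0 < k →
    ∃ (m : ℕ) (B : SimpleGraph (Fin m)), K m B ∧
      ∀ c : Fin m → Fin k, ∃ f : A ↪g B, ∀ x y, c (f x) = c (f y)

/-!
If `α ≥ 2` then a single edge `e` has `δ_α(e) = 2 - α ≤ 0`, so `K_α^+` consists of the edgeless
graphs, and these are indivisible by the pigeonhole principle. If `α < 2` then `K_α^+` contains an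
edge; on the other hand every graph of positive `δ_α` has average degree less than `2 / α`, so
the graphs of `K_α^+` are uniformly degenerate, hence of bounded chromatic number. A proper coloring
with boundedly many colors leaves no edge monochromatic, so `K_α^+` is divisible.
-/

section Degenerate

variable {V : Type*} {G : SimpleGraph V} {d k : ℕ}

/-- A graph is `d`-degenerate if every nonempty set `s` of vertices contains a vertex with at most
`d` neighbors in `s`. It bounds the chromatic number by greedy coloring. Neighbors are counted with
`Set.encard`, so that an infinite neighborhood does not count as empty. -/
def IsDegenerate (G : SimpleGraph V) (d : ℕ) : Prop :=
  ∀ s : Set V, s.Nonempty → ∃ v ∈ s, (s ∩ G.neighborSet v).encard ≤ d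

lemma colorable_induce_insert {s : Set V} {v : V} (hs : (G.induce s).Colorable k)
    (hv : (s ∩ G.neighborSet v).encard < k) : (G.induce (insert v s)).Colorable k := by
  classical
  obtain ⟨c⟩ := hs
  obtain ⟨i, hi⟩ : ∃ i, i ∉ c '' (Subtype.val ⁻¹' G.neighborSet v) := by
    have hcard : (c '' (Subtype.val ⁻¹' G.neighborSet v)).encard < k := by
      refine (Set.encard_image_le _ _).trans_lt ?_
      rwa [← Subtype.val_injective.encard_image, Subtype.image_preimage_coe]
    by_contra! hall
    simp [Set.eq_univ_of_forall hall] at hcard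
  have hfree (u : s) (hu : G.Adj v u) : c u ≠ i := fun h ↦ hi ⟨u, hu, h⟩
  have eq_of_notMem {u : ↥(insert v s)} (hu : ↑u ∉ s) : (u : V) = v := u.2.resolve_right hu
  refine ⟨Coloring.mk (fun u ↦ if hu : ↑u ∈ s then c ⟨u, hu⟩ else i) fun {u w} huw ↦ ?_⟩
  replace huw : G.Adj u w := huw
  by_cases hu : ↑u ∈ s <;> by_cases hw : ↑w ∈ s <;> simp only [hu, hw, dite_true, dite_false]
  · exact c.valid huw
  · exact hfree ⟨u, hu⟩ (by simpa only [eq_of_notMem hw] using huw.symm)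
  · exact (hfree ⟨w, hw⟩ (by simpa only [eq_of_notMem hu] using huw)).symm
  · exact (huw.ne ((eq_of_notMem hu).trans (eq_of_notMem hw).symm)).elim

lemma IsDegenerate.colorable [Finite V] (hG : IsDegenerate G d) : G.Colorable (d + 1) := by
  suffices H : ∀ s : Set V, (G.induce s).Colorable (d + 1) from
    (H Set.univ).of_hom G.induceUnivIso.symm.toHom
  intro s
  induction s using WellFoundedLT.induction with
  | ind s ih =>
    obtain rfl | hs := s.eq_empty_or_nonempty
    · exact .of_isEmpty _
    obtain ⟨v, hvs, hv⟩ := hG s hs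
    have hlt : ((s \ {v}) ∩ G.neighborSet v).encard < (d + 1 : ℕ) :=
      (Set.encard_le_encard (Set.inter_subset_inter_left _ Set.sdiff_subset)).trans_lt
        (hv.trans_lt (by exact_mod_cast d.lt_succ_self))
    have hcol := colorable_induce_insert (ih _ (Set.sdiff_singleton_ssubset.2 hvs)) hlt
    rwa [Set.insert_sdiff_singleton, Set.insert_eq_of_mem hvs] at hcol

end Degenerate

section Indivisible

variable {K : ∀ n : ℕ, SimpleGraph (Fin n) → Prop}

lemma Indivisible.eq_bot_of_forall_colorable (hK : Indivisible K) {k : ℕ}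
    (hcol : ∀ m B, K m B → B.Colorable k) {n : ℕ} {A : SimpleGraph (Fin n)} (hA : K n A) :
    A = ⊥ := by
  refine eq_bot_iff_forall_not_adj.2 fun x y hxy ↦ ?_
  obtain ⟨m, B, hB, hmono⟩ := hK n A hA (k + 1) k.succ_pos
  obtain ⟨c⟩ := (hcol m B hB).mono k.le_succ
  obtain ⟨f, hf⟩ := hmono c
  exact c.valid (f.map_adj_iff.2 hxy) (hf x y)

lemma indivisible_eq_bot : Indivisible fun n (G : SimpleGraph (Fin n)) ↦ G = ⊥ := by
  rintro n A rfl k hk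
  refine ⟨k * n, ⊥, rfl, fun c ↦ ?_⟩
  have : Nonempty (Fin k) := ⟨⟨0, hk⟩⟩
  obtain ⟨i, hi⟩ := Fintype.exists_le_card_fiber_of_mul_le_card c (n := n) (by simp)
  obtain ⟨t, ht, htn⟩ := Finset.exists_subset_card_eq hi
  let e := (t.orderEmbOfFin htn).toEmbedding
  have he (x : Fin n) : c (e x) = i := (Finset.mem_filter.1 (ht (t.orderEmbOfFin_mem htn x))).2
  exact ⟨⟨e, by simp⟩, fun x y ↦ (he x).trans (he y).symm⟩

end Indivisible

section Sparse

variable {α : ℝ} {V : Type} {G : SimpleGraph V}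

lemma deltaAlpha_eq_card_sub [Fintype V] [DecidableRel G.Adj] :
    deltaAlpha α G = Fintype.card V - α * G.edgeFinset.card := by
  rw [deltaAlpha, Nat.card_eq_fintype_card, Nat.card_eq_fintype_card, edgeFinset_card]

lemma exists_mul_degree_lt_two_of_deltaAlpha_pos [Fintype V] [DecidableRel G.Adj]
    (hG : 0 < deltaAlpha α G) : ∃ v, α * G.degree v < 2 := by
  have hsum : ∑ v, α * (G.degree v : ℝ) < ∑ _v : V, (2 : ℝ) :=
    calc ∑ v, α * (G.degree v : ℝ) = 2 * (α * G.edgeFinset.card) := by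
          rw [← Finset.mul_sum, ← Nat.cast_sum, G.sum_degrees_eq_twice_card_edges]
          push_cast
          ring
      _ < 2 * Fintype.card V := by rw [deltaAlpha_eq_card_sub] at hG; linarith
      _ = ∑ _v : V, (2 : ℝ) := by simp [mul_comm]
  obtain ⟨v, -, hv⟩ := Finset.exists_lt_of_sum_lt hsum
  exact ⟨v, hv⟩

lemma MemKalphaPlus.isDegenerate [Finite V] (hG : MemKalphaPlus α G) {d : ℕ}
    (hd : 2 ≤ α * (d + 1)) : IsDegenerate G d := by
  classical
  have := Fintype.ofFinite V
  intro s hs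
  obtain ⟨v, hv⟩ := exists_mul_degree_lt_two_of_deltaAlpha_pos (hG s hs)
  have hα : 0 < α := pos_of_mul_pos_left (two_pos.trans_le hd) (by positivity)
  have hdeg : (G.induce s).degree v ≤ d := by
    have : ((G.induce s).degree v : ℝ) < d + 1 := lt_of_mul_lt_mul_left (hv.trans_le hd) hα.le
    exact Nat.lt_succ_iff.1 (by exact_mod_cast this)
  refine ⟨v, v.2, ?_⟩
  have hcard : (s ∩ G.neighborSet v).encard = (G.induce s).degree v := by
    rw [← card_neighborFinset_eq_degree, ← Finset.card_map, map_neighborFinset_induce,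
      ← Set.encard_coe_eq_coe_finsetCard, Set.inter_comm]
    simp
  rw [hcard]
  exact_mod_cast hdeg

lemma memKalphaPlus_bot [Finite V] : MemKalphaPlus α (⊥ : SimpleGraph V) := by
  intro s hs
  simpa [deltaAlpha] using (Set.ncard_pos s.toFinite).2 hs

lemma memKalphaPlus_top [Finite V] (hα : α * (Nat.card V - 1) < 2) :
    MemKalphaPlus α (⊤ : SimpleGraph V) := by
  classical
  have := Fintype.ofFinite V
  intro s hs
  have := hs.to_subtype
  have hs1 : (1 : ℝ) ≤ Fintype.card s := by exact_mod_cast Fintype.card_pos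
  have hsV : (Fintype.card s : ℝ) ≤ Nat.card V := by
    rw [Nat.card_eq_fintype_card]
    exact_mod_cast set_fintype_card_le_univ s
  have hlt : α * (Fintype.card s - 1) < 2 := by
    obtain hα0 | hα0 := le_total α 0 <;> nlinarith
  have hδ : deltaAlpha α ((⊤ : SimpleGraph V).induce s) =
      Fintype.card s * (2 - α * (Fintype.card s - 1)) / 2 := by
    rw [induce_top, deltaAlpha_eq_card_sub, card_edgeFinset_top_eq_card_choose_two,
      Nat.cast_choose_two]
    ring
  rw [hδ]
  exact half_pos (mul_pos (one_pos.trans_le hs1) (sub_pos.2 hlt))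

lemma deltaAlpha_induce_pair {u v : V} (huv : G.Adj u v) :
    deltaAlpha α (G.induce {u, v}) = 2 - α := by
  classical
  have htop : G.induce {u, v} = ⊤ := by
    rw [induce_eq_top, isClique_pair]
    exact fun _ ↦ huv
  have hcard : Fintype.card ({u, v} : Set V) = 2 := by simp [huv.ne]
  rw [htop, deltaAlpha_eq_card_sub, card_edgeFinset_top_eq_card_choose_two, hcard]
  norm_num

lemma memKalphaPlus_iff_eq_bot [Finite V] (hα : 2 ≤ α) : MemKalphaPlus α G ↔ G = ⊥ := by
  refine ⟨fun hG ↦ eq_bot_iff_forall_not_adj.2 fun u v huv ↦ ?_, ?_⟩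
  · have hpos := hG {u, v} (Set.insert_nonempty u {v})
    rw [deltaAlpha_induce_pair huv] at hpos
    linarith
  · rintro rfl
    exact memKalphaPlus_bot

end Sparse

theorem kalphaPlus_indivisible_iff (α : ℝ) (hα : 0 < α) :
    Indivisible (fun n (G : SimpleGraph (Fin n)) => MemKalphaPlus α G) ↔ 2 ≤ α := by
  refine ⟨fun hK ↦ ?_, fun hα2 ↦ ?_⟩
  · by_contra! hα2
    obtain ⟨d, hd⟩ := exists_nat_ge (2 / α)
    rw [div_le_iff₀' hα] at hd
    have hcol (m : ℕ) (B : SimpleGraph (Fin m)) (hB : MemKalphaPlus α B) : B.Colorable (d + 1) :=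
      (hB.isDegenerate (by linarith)).colorable
    have hedge : MemKalphaPlus α (⊤ : SimpleGraph (Fin 2)) :=
      memKalphaPlus_top (by norm_num [hα2])
    exact top_ne_bot (hK.eq_bot_of_forall_colorable hcol hedge)
  · simpa only [memKalphaPlus_iff_eq_bot hα2] using indivisible_eq_bot
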